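/- Let S[1..n] be a string over a linearly ordered alphabet, 2 ≤ i ≤ n, and let J_i = {j : 1 ≤ j < i and S[j] ≺ S[k] for every k with j < k < i} (the set of indices kept on the stack in the algorithm computing PP and PC). Then: (a) if PP_S(i) < i, PP_S(i) ∈ J_i and PP_S(i) is the largest element j of J_i with S[j] ≺ S[i]; (b) if PP_S(i) = i, then S[i] ≺ S[j] for every j ∈ J_i; and (c) if PC_S(i) < i, then PC_S(i) ∈ J_i. (Correctness of the stack-based computation of the prefix-parent and prefix-child representations.) -/

import Mathlib

/-!
The relation `≺` is the pullback of the strict lexicographic order under the injection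
`j ↦ (S[j], j)`, so it is a strict total order on positions. If `p = PP_S(i) < i`, every `k` strictly
between `p` and `i` fails `S[k] ≺ S[i]` by maximality of `p`, hence `S[p] ≺ S[i] ≺ S[k]`, which puts
`p` in `J_i`; it is the largest admissible element since it is already the largest position before
`i` with `S[p] ≺ S[i]`. If `PP_S(i) = i`, no position before `i` precedes `i` in `≺`, so totality
gives (b). Finally, if `PC_S(i) < i` then `PC_S(i)` is the `≺`-minimum position of an interval
ending at `i - 1`, and such a minimum precedes everything to its right in the interval.
-/

namespace CTM

variable {α : Type*} [LinearOrder α] {n : ℕ}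

/-- `S[i] ≺ S[j]`: strict order on positions, values compared first, ties broken
toward the smaller index. -/
def prec (S : Fin n → α) (i j : Fin n) : Prop :=
  S i < S j ∨ (S i = S j ∧ i < j)

instance (S : Fin n → α) (i j : Fin n) : Decidable (prec S i j) :=
  inferInstanceAs (Decidable (_ ∨ _))

/-- `S[i] ⪯ S[j]`. -/
def preceq (S : Fin n → α) (i j : Fin n) : Prop :=
  i = j ∨ prec S i j

/-- The set `{j : j < i and S[j] ≺ S[i]}`. -/
def PPset (S : Fin n → α) (i : Fin n) : Finset (Fin n) :=
  Finset.univ.filter (fun j => j < i ∧ prec S j i)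

/-- Prefix-parent representation. -/
def PP (S : Fin n → α) (i : Fin n) : Fin n :=
  if h : (PPset S i).Nonempty then (PPset S i).max' h else i

lemma PP_le (S : Fin n → α) (i : Fin n) : PP S i ≤ i := by
  unfold PP
  split
  · next h =>
      have hm := (PPset S i).max'_mem h
      simp only [PPset, Finset.mem_filter] at hm
      exact le_of_lt hm.2.1
  · exact le_refl i

/-- The ≺-minimum position of a nonempty finite set of positions. -/
noncomputable def minPos (S : Fin n → α) (F : Finset (Fin n)) (h : F.Nonempty) : Fin n :=
  (F.exists_min_image (fun j => toLex (S j, j)) h).choose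

lemma minPos_mem (S : Fin n → α) (F : Finset (Fin n)) (h : F.Nonempty) :
    minPos S F h ∈ F :=
  (F.exists_min_image (fun j => toLex (S j, j)) h).choose_spec.1

/-- Prefix-child representation (0-indexed: position `0` is the first position). -/
noncomputable def PC (S : Fin n → α) (i : Fin n) : Fin n :=
  if h0 : i.val = 0 then i
  else if h1 : PP S i = i then
    minPos S (Finset.univ.filter (fun j => j < i))
      ⟨⟨0, i.pos⟩, Finset.mem_filter.mpr ⟨Finset.mem_univ _, by
        simp only [Fin.lt_def]; omega⟩⟩
  else if _h2 : (PP S i).val + 1 = i.val then i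
  else
    minPos S (Finset.univ.filter (fun j => PP S i < j ∧ j < i))
      ⟨⟨(PP S i).val + 1, by
          have h3 : (PP S i).val < i.val := Fin.lt_def.mp (lt_of_le_of_ne (PP_le S i) h1)
          have h4 := i.isLt
          omega⟩,
        Finset.mem_filter.mpr ⟨Finset.mem_univ _, by
          have h3 : (PP S i).val < i.val := Fin.lt_def.mp (lt_of_le_of_ne (PP_le S i) h1)
          constructor <;> simp only [Fin.lt_def] <;> omega⟩⟩

/-- Global-parent representation. -/
noncomputable def GP (S : Fin n → α) (i : Fin n) : Fin n :=
  if h : ∃ j, i < j ∧ PC S j = i then h.choose else PP S i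

/-- Binary trees whose nodes are positions of a string of length `n`. -/
inductive PosTree (n : ℕ) where
  | nil : PosTree n
  | node : Fin n → PosTree n → PosTree n → PosTree n

/-- The Cartesian tree of the restriction of `S` to a finite set of positions. -/
noncomputable def CTAux (S : Fin n → α) (F : Finset (Fin n)) : PosTree n :=
  if h : F.Nonempty then
    PosTree.node (minPos S F h)
      (CTAux S (F.filter (fun j => j < minPos S F h)))
      (CTAux S (F.filter (fun j => minPos S F h < j)))
  else PosTree.nil
termination_by F.card
decreasing_by
  · exact Finset.card_lt_card
      (Finset.filter_ssubset.mpr ⟨minPos S F h, minPos_mem S F h, by simp⟩)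
  · exact Finset.card_lt_card
      (Finset.filter_ssubset.mpr ⟨minPos S F h, minPos_mem S F h, by simp⟩)

/-- The Cartesian tree of a string, as a binary tree on positions. -/
noncomputable def CT (S : Fin n → α) : PosTree n :=
  CTAux S Finset.univ

/-- Parent-distance representation. -/
def PD (S : Fin n → α) (i : Fin n) : ℕ :=
  if h : (PPset S i).Nonempty then i.val - ((PPset S i).max' h).val else 0


/-- `J_i = {j : j < i and S[j] ≺ S[k] for every j < k < i}`: the set of indices kept on
the stack in the algorithm computing `PP` and `PC`. -/
def stackSet (S : Fin n → α) (i : Fin n) : Finset (Fin n) :=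
  Finset.univ.filter (fun j => j < i ∧ ∀ k : Fin n, j < k → k < i → prec S j k)

/-- `≺` is the strict lexicographic order on the pairs `(S[j], j)`. -/
lemma prec_iff_toLex (S : Fin n → α) (i j : Fin n) :
    prec S i j ↔ toLex (S i, i) < toLex (S j, j) := by
  rw [Prod.Lex.toLex_lt_toLex, prec]

lemma prec_trans {S : Fin n → α} {i j k : Fin n} (hij : prec S i j) (hjk : prec S j k) :
    prec S i k := by
  rw [prec_iff_toLex] at *
  exact hij.trans hjk

lemma prec_of_not_prec {S : Fin n → α} {i j : Fin n} (hne : i ≠ j) (h : ¬ prec S j i) :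
    prec S i j := by
  rw [prec_iff_toLex] at *
  refine lt_of_le_of_ne (not_lt.mp h) fun he => hne ?_
  exact congrArg Prod.snd (toLex.injective he)

lemma minPos_prec (S : Fin n → α) (F : Finset (Fin n)) (h : F.Nonempty) {k : Fin n}
    (hk : k ∈ F) (hne : minPos S F h ≠ k) : prec S (minPos S F h) k := by
  refine prec_of_not_prec hne fun hlt => ?_
  rw [prec_iff_toLex] at hlt
  exact absurd hlt
    (not_lt.mpr ((F.exists_min_image (fun j => toLex (S j, j)) h).choose_spec.2 k hk))

lemma mem_stackSet {S : Fin n → α} {i j : Fin n} :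
    j ∈ stackSet S i ↔ j < i ∧ ∀ k : Fin n, j < k → k < i → prec S j k := by
  simp [stackSet]

lemma mem_PPset {S : Fin n → α} {i j : Fin n} : j ∈ PPset S i ↔ j < i ∧ prec S j i := by
  simp [PPset]

lemma PP_mem_PPset {S : Fin n → α} {i : Fin n} (h : (PPset S i).Nonempty) :
    PP S i ∈ PPset S i := by
  rw [PP, dif_pos h]
  exact Finset.max'_mem _ h

lemma le_PP {S : Fin n → α} {i j : Fin n} (hj : j ∈ PPset S i) : j ≤ PP S i := by
  rw [PP, dif_pos ⟨j, hj⟩]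
  exact Finset.le_max' _ j hj

/-- The `≺`-minimum position of a set of positions that lie before `i` and are closed under moving
right towards `i` stays on the stack. -/
lemma minPos_mem_stackSet {S : Fin n → α} {i : Fin n} (F : Finset (Fin n)) (h : F.Nonempty)
    (hlt : ∀ j ∈ F, j < i) (hup : ∀ j ∈ F, ∀ k, j < k → k < i → k ∈ F) :
    minPos S F h ∈ stackSet S i :=
  mem_stackSet.mpr ⟨hlt _ (minPos_mem S F h), fun k hk hki =>
    minPos_prec S F h (hup _ (minPos_mem S F h) k hk hki) hk.ne⟩

/-- Correctness of the stack-based computation of `PP` and `PC`: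
(a) if `PP_S(i) < i` then `PP_S(i)` is the largest element `j` of `J_i` with `S[j] ≺ S[i]`;
(b) if `PP_S(i) = i` then `S[i] ≺ S[j]` for every `j ∈ J_i`;
(c) if `PC_S(i) < i` then `PC_S(i) ∈ J_i`. -/
theorem stack_correct (S : Fin n → α) (i : Fin n) (hi : 0 < i.val) :
    (PP S i < i →
        PP S i ∈ stackSet S i ∧ prec S (PP S i) i ∧
          ∀ j ∈ stackSet S i, prec S j i → j ≤ PP S i)
    ∧ (PP S i = i → ∀ j ∈ stackSet S i, prec S i j)
    ∧ (PC S i < i → PC S i ∈ stackSet S i) := by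
  refine ⟨fun hlt => ?_, fun heq j hj => ?_, fun hlt => ?_⟩
  · have hne : (PPset S i).Nonempty := by
      by_contra hne
      rw [PP, dif_neg hne] at hlt
      exact lt_irrefl _ hlt
    have hp := (mem_PPset.mp (PP_mem_PPset hne)).2
    refine ⟨mem_stackSet.mpr ⟨hlt, fun k hk hki => ?_⟩, hp, fun j hj hji =>
      le_PP (mem_PPset.mpr ⟨(mem_stackSet.mp hj).1, hji⟩)⟩
    exact prec_trans hp (prec_of_not_prec hki.ne' fun hki' =>
      absurd (le_PP (mem_PPset.mpr ⟨hki, hki'⟩)) (not_le.mpr hk))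
  · have hji := (mem_stackSet.mp hj).1
    refine prec_of_not_prec hji.ne' fun hp => ?_
    have hmem := PP_mem_PPset ⟨j, mem_PPset.mpr ⟨hji, hp⟩⟩
    exact (mem_PPset.mp hmem).1.ne heq
  · unfold PC at hlt ⊢
    split_ifs at hlt ⊢ with h0 h1 h2
    · exact absurd hlt (lt_irrefl _)
    · apply minPos_mem_stackSet
      · simp
      · simp
    · exact absurd hlt (lt_irrefl _)
    · apply minPos_mem_stackSet
      · simp
      · simp only [Finset.mem_filter, Finset.mem_univ, true_and]
        exact fun j hj k hjk hki => ⟨hj.1.trans hjk, hki⟩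

end CTM
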